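/- Let R be a commutative ring, m ≥ 1, x_1,…,x_m ∈ R, and ε ∈ {0,1}^m with support S = {i : ε_i = 1}. Let A_ε be the m×m matrix with (i,i) entry x_i(1 − ε_i x_i) and (i,k) entry ε_i x_k for k ≠ i. Then det A_ε = x_1⋯x_m if S = ∅, and det A_ε = x_1⋯x_m · (−1)^{|S|−1} (Σ_{i∈S} Π_{j∈S, j≠i} x_j − Π_{j∈S} x_j) if S ≠ ∅. (A_ε is the coefficient matrix of the linear system arising from the (0,1)-initial forms L_i^B of the Lauricella F_B operators.) -/

import Mathlib

/-- The matrix `A_ε` of the linear system coming from the `(0,1)`-initial forms `L_i^B`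
of Lauricella's `F_B` system: the `(i,i)` entry is `x_i(1 − ε_i x_i)` and the `(i,k)`
entry for `k ≠ i` is `ε_i x_k`, where `ε ∈ {0,1}^m`. -/
def AMat {R : Type*} [CommRing R] {m : ℕ} (x : Fin m → R) (ε : Fin m → Bool) :
    Matrix (Fin m) (Fin m) R :=
  Matrix.of fun i j =>
    if i = j then x i * (1 - (if ε i then x i else 0)) else (if ε i then x j else 0)

open Matrix in
theorem aux_row {R : Type*} [CommRing R] {n : Type*} [Fintype n] [DecidableEq n]
    (d u v : n → R) (k : n) :
    ((Matrix.of fun i j => (if i = j then d i else 0) + u i * v j).updateRow k v).det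
      = v k * ∏ j ∈ Finset.univ.erase k, d j := by
  have h1 : ((Matrix.diagonal d).updateRow k v).det = v k * ∏ j ∈ Finset.univ.erase k, d j := by
    rw [← Matrix.cramer_transpose_apply, Matrix.cramer_eq_adjugate_mulVec,
      Matrix.diagonal_transpose, Matrix.adjugate_diagonal, Matrix.mulVec_diagonal, mul_comm]
  rw [← h1]
  refine Matrix.det_eq_of_forall_row_eq_smul_add_const (Function.update u k 0) k (by simp) ?_
  intro i j
  by_cases h : i = k
  · subst h; simp
  · simp [Matrix.updateRow_apply, h, Matrix.diagonal_apply]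

theorem aux_det {R : Type*} [CommRing R] {n : Type*} [Fintype n] [DecidableEq n]
    (d v : n → R) (s : Finset n) :
    (Matrix.of fun i j => (if i = j then d i else 0) + (if i ∈ s then 1 else 0) * v j).det
      = ∏ i, d i + ∑ i ∈ s, v i * ∏ j ∈ Finset.univ.erase i, d j := by
  induction s using Finset.induction_on with
  | empty =>
    rw [← Matrix.det_diagonal]
    simp only [Finset.sum_empty, add_zero]
    congr 1
    ext i j
    simp [Matrix.diagonal_apply]
  | insert k s hk ih =>
    rw [Finset.sum_insert hk, add_left_comm, ← ih,
      ← aux_row d (fun i => if i ∈ s then 1 else 0) v k]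
    set M : Matrix n n R :=
      Matrix.of fun i j => (if i = j then d i else 0) + (if i ∈ s then 1 else 0) * v j with hM
    have h2 : M.det = (M.updateRow k (M k)).det := by rw [Matrix.updateRow_eq_self]
    rw [h2, ← Matrix.det_updateRow_add]
    congr 1
    ext i j
    by_cases h : i = k
    · subst h; simp [hM, hk, add_comm]
    · simp [Matrix.updateRow_apply, h, hM]

/-- With `S = {i : ε_i = 1}`, the determinant of `A_ε` is `x_1⋯x_m` when `S = ∅`, and
`x_1⋯x_m ⋅ (−1)^{|S|−1} (Σ_{i∈S} Π_{j∈S, j≠i} x_j − Π_{j∈S} x_j)` when `S ≠ ∅`. -/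
theorem AMat_det {R : Type*} [CommRing R] (m : ℕ) (hm : 1 ≤ m) (x : Fin m → R)
    (ε : Fin m → Bool) (S : Finset (Fin m))
    (hS : S = Finset.univ.filter (fun i => ε i = true)) :
    (S = ∅ → (AMat x ε).det = ∏ i, x i) ∧
      (S.Nonempty → (AMat x ε).det =
        (∏ i, x i) * ((-1 : R) ^ (S.card - 1) *
          ((∑ i ∈ S, ∏ j ∈ S.erase i, x j) - ∏ j ∈ S, x j))) := by
  have key : (AMat x ε).det = (∏ i, x i) *
      (∏ i, (if i ∈ S then -x i else 1) +
        ∑ i ∈ S, 1 * ∏ j ∈ Finset.univ.erase i, (if j ∈ S then -x j else 1)) := by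
    rw [← aux_det (fun i => if i ∈ S then -x i else 1) (fun _ => 1) S, ← Matrix.det_mul_row]
    congr 1
    ext i j
    have hi : i ∈ S ↔ ε i = true := by simp [hS]
    by_cases h : i = j
    · subst h
      by_cases he : ε i = true <;> simp [AMat, hi, he] <;> ring
    · by_cases he : ε i = true <;> simp [AMat, hi, he, h]
  constructor
  · intro h0
    rw [key, h0]
    simp
  · intro hne
    rw [key]
    congr 1
    have hprod : ∏ i, (if i ∈ S then -x i else 1) = (-1) ^ S.card * ∏ j ∈ S, x j := by
      rw [Finset.prod_ite_mem, Finset.univ_inter, Finset.prod_neg]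
    have hsum : ∀ i ∈ S, 1 * ∏ j ∈ Finset.univ.erase i, (if j ∈ S then -x j else 1)
        = (-1) ^ (S.card - 1) * ∏ j ∈ S.erase i, x j := by
      intro i hi
      rw [one_mul, Finset.prod_ite_mem, Finset.erase_inter, Finset.univ_inter, Finset.prod_neg,
        Finset.card_erase_of_mem hi]
    rw [hprod, Finset.sum_congr rfl hsum, ← Finset.mul_sum]
    obtain ⟨c, hc⟩ := Nat.exists_eq_succ_of_ne_zero hne.card_pos.ne'
    rw [hc]
    simp only [Nat.succ_eq_add_one, Nat.add_sub_cancel, pow_succ]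
    ring
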